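/- arXiv:1612.08773 — 4 statements merged into one kernel-verified Lean document; each statement's English description precedes it below -/
import Mathlib

section
/- For every real number v ≥ 1, one has v²(log v)² + 2v²(log v) − v² + 1 ≥ 0. -/
/-- For every real `v ≥ 1`, `v²(log v)² + 2v²(log v) − v² + 1 ≥ 0`. -/
theorem aux_f1_nonneg (v : ℝ) (hv : 1 ≤ v) :
    0 ≤ v ^ 2 * Real.log v ^ 2 + 2 * v ^ 2 * Real.log v - v ^ 2 + 1 := by
  have hv0 : 0 < v ^ 2 := by positivity
  have h := Real.one_sub_inv_le_log_of_pos hv0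
  rw [Real.log_pow] at h
  push_cast at h
  have h2 := mul_le_mul_of_nonneg_left h hv0.le
  rw [mul_sub, mul_inv_cancel₀ hv0.ne'] at h2
  have h3 : 0 ≤ v ^ 2 * Real.log v ^ 2 := by positivity
  linarith
end

section
/- For every real number v ≥ 1, one has v + 1/v − 2 ≤ v(log v)². -/
/-- For every real `v ≥ 1`, `v + 1/v − 2 ≤ v (log v)²`. -/
theorem f_nonpos (v : ℝ) (hv : 1 ≤ v) :
    v + 1 / v - 2 ≤ v * Real.log v ^ 2 := by
  have hpos : 0 < v := by linarith
  have h1 : 1 - v⁻¹ ≤ Real.log v := Real.one_sub_inv_le_log_of_pos hpos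
  have h0 : 0 ≤ 1 - v⁻¹ := sub_nonneg.mpr (inv_le_one_of_one_le₀ hv)
  have h2 : v + 1 / v - 2 = v * (1 - v⁻¹) ^ 2 := by
    field_simp
    ring
  rw [h2]
  exact mul_le_mul_of_nonneg_left (pow_le_pow_left₀ h0 h1 2) hpos.le
end

section
/- For every real number γ > 0, the infimum over s ∈ (0,∞) of the quantity −sγ + s²e^s/2 is at most −(γ/2)·log(γ/(2e)). -/
/-- For every real `γ > 0`, the infimum over `s ∈ (0,∞)` of `−sγ + s²e^s/2` is at most
`−(γ/2)·log(γ/(2e))`. -/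
theorem legendre_transform_bound (γ : ℝ) (hγ : 0 < γ) :
    sInf ((fun s : ℝ => -s * γ + s ^ 2 * Real.exp s / 2) '' Set.Ioi 0) ≤
      -(γ / 2) * Real.log (γ / (2 * Real.exp 1)) := by
  have hbdd : BddBelow ((fun s : ℝ => -s * γ + s ^ 2 * Real.exp s / 2) '' Set.Ioi 0) := by
    refine ⟨-γ ^ 2 / 2, ?_⟩
    rintro _ ⟨s, hs, rfl⟩
    have hs' : (0 : ℝ) < s := hs
    have h1 : 1 ≤ Real.exp s := Real.one_le_exp hs'.le
    have h2 : s ^ 2 * 1 ≤ s ^ 2 * Real.exp s := by gcongr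
    simp only
    nlinarith [sq_nonneg (s - γ)]
  suffices h : ∃ s : ℝ, 0 < s ∧ -s * γ + s ^ 2 * Real.exp s / 2 ≤
      -(γ / 2) * Real.log (γ / (2 * Real.exp 1)) by
    obtain ⟨s, hs, h⟩ := h
    exact (csInf_le hbdd ⟨s, hs, rfl⟩).trans h
  obtain ⟨u, hu⟩ : ∃ u, u = Real.log (γ / (2 * Real.exp 1)) := ⟨_, rfl⟩
  rw [← hu]
  have hγu : γ = 2 * Real.exp (1 + u) := by
    rw [Real.exp_add, hu, Real.exp_log (by positivity)]
    field_simp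
  rcases lt_or_ge (-1) u with h | h
  · refine ⟨(u + 1) / 2, by linarith, ?_⟩
    obtain ⟨s, hs⟩ : ∃ s, s = (u + 1) / 2 := ⟨_, rfl⟩
    rw [← hs]
    have hs0 : 0 < s := by linarith
    have hu2 : u = 2 * s - 1 := by linarith
    have h3 : γ = 2 * (Real.exp s * Real.exp s) := by
      rw [hγu, ← Real.exp_add]; congr 2; linarith
    have hq := Real.quadratic_le_exp_of_nonneg hs0.le
    have h4 : s ^ 2 * Real.exp s ≤ (2 * Real.exp s) * Real.exp s := by
      gcongr; linarith
    rw [hu2]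
    nlinarith
  · refine ⟨γ / 2, by linarith, ?_⟩
    have h2 : γ ≤ 2 := by
      have : Real.exp (1 + u) ≤ 1 := Real.exp_le_one_iff.2 (by linarith)
      linarith
    have h3 : Real.exp (γ / 2) ≤ 4 := by
      have : Real.exp (γ / 2) ≤ Real.exp 1 := Real.exp_le_exp.2 (by linarith)
      linarith [Real.exp_one_lt_d9]
    have h4 : (γ / 2) ^ 2 * Real.exp (γ / 2) ≤ (γ / 2) ^ 2 * 4 := by gcongr
    nlinarith
end

section
/- Let r, t, D > 0, m > 0 and Λ ≥ 0 be real numbers such that 2r/(D e t) > 1 and (r/2)·log(2r/(D e t)) ≥ m. For each natural number k set a_k = (2^{k+1} r)^m · exp(−(2^k r/2)·log(2^k r/(2 D e t)) − Λ t). Then for every natural number k, a_{k+1} ≤ (2/e)^m · a_k. -/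
/-- Ratio bound `a_{k+1} ≤ (2/e)^m a_k` for the dyadic-annuli sequence in the proof of
Theorem 3.2. -/
theorem annuli_ratio_bound (r t D m Λ : ℝ) (hr : 0 < r) (ht : 0 < t) (hD : 0 < D)
    (hm : 0 < m) (hΛ : 0 ≤ Λ)
    (h1 : 1 < 2 * r / (D * Real.exp 1 * t))
    (h2 : m ≤ r / 2 * Real.log (2 * r / (D * Real.exp 1 * t)))
    (a : ℕ → ℝ)
    (ha : ∀ k : ℕ, a k = (2 ^ (k + 1) * r) ^ m *
      Real.exp (-(2 ^ k * r / 2) * Real.log (2 ^ k * r / (2 * D * Real.exp 1 * t)) - Λ * t)) :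
    ∀ k : ℕ, a (k + 1) ≤ (2 / Real.exp 1) ^ m * a k := by
  intro k
  have hDet : 0 < D * Real.exp 1 * t := by positivity
  have hL : 0 < Real.log (2 * r / (D * Real.exp 1 * t)) := Real.log_pos h1
  have hlog : ∀ j : ℕ, Real.log (2 ^ j * r / (2 * D * Real.exp 1 * t)) =
      Real.log (2 * r / (D * Real.exp 1 * t)) + ((j : ℝ) - 2) * Real.log 2 := by
    intro j
    have e : (2 : ℝ) ^ j * r / (2 * D * Real.exp 1 * t) =
        2 * r / (D * Real.exp 1 * t) * 2 ^ j / 2 ^ 2 := by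
      field_simp
    rw [e, Real.log_div (by positivity) (by positivity),
      Real.log_mul (by positivity) (by positivity), Real.log_pow, Real.log_pow]
    push_cast
    ring
  rw [ha, ha, hlog, hlog]
  set L := Real.log (2 * r / (D * Real.exp 1 * t)) with hLdef
  have hl : 0 < Real.log 2 := Real.log_pos (by norm_num)
  have hp : (1 : ℝ) ≤ 2 ^ k := one_le_pow₀ (by norm_num)
  have e1 : ((2 : ℝ) ^ (k + 1 + 1) * r) ^ m = 2 ^ m * (2 ^ (k + 1) * r) ^ m := by
    rw [← Real.mul_rpow (by positivity) (by positivity)]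
    congr 1
    ring
  have e2 : (2 / Real.exp 1) ^ m = 2 ^ m * Real.exp (-m) := by
    rw [Real.div_rpow (by positivity) (by positivity), Real.exp_one_rpow, Real.exp_neg,
      div_eq_mul_inv]
  have key : m ≤ 2 ^ k * r / 2 * (L + k * Real.log 2) := by
    have h3 : r / 2 * L ≤ 2 ^ k * (r / 2 * L) := le_mul_of_one_le_left (by positivity) hp
    have h4 : 0 ≤ 2 ^ k * r / 2 * (k * Real.log 2) := by positivity
    linarith
  rw [e1, e2]
  have e3 : ∀ A B C E : ℝ, A * Real.exp B * (C * Real.exp E) = A * C * Real.exp (B + E) := by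
    intro A B C E
    rw [Real.exp_add]
    ring
  rw [e3]
  apply mul_le_mul_of_nonneg_left _ (by positivity)
  apply Real.exp_le_exp.mpr
  push_cast
  rw [pow_succ]
  linarith
end
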